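/- arXiv:1910.02823 — 2 statements merged into one kernel-verified Lean document; each statement's English description precedes it below -/
import Mathlib

section
/- Let Y be a Hausdorff space with a strictly increasing closed cover {B_n}_{n∈ℕ}. A Hausdorff space X is regular and first countable if and only if to each point x ∈ X one can assign a lower semi-continuous set-valued map φ_x : X → F(Y) such that: (G) for every x ∈ X, {x} = ⋂_{n∈ℕ} φ_x^{-1}[Y∖B_n]; and (b') for every x ∈ X and every closed set F ⊆ X with x ∉ F, there exist an open set V ⊇ F and n ∈ ℕ with V ⊆ φ_x^#[B_n]. -/
/-!
For a point `x`, the sets `U n = {y | φ x y ⊄ B n}` are open neighbourhoods of `x` as soon as `φ x`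
is lower semi-continuous and `{x} = ⋂ n, U n`; the separation condition says that every closed set
missing `x` has an open neighbourhood disjoint from some `U n`. This gives regularity and makes
`(U n)` a countable base at `x`.

Conversely, a countable open base `(U n)` at `x` is encoded by the map
`y ↦ ⋂ {B n | y ∉ U n}` (`baseMap`). A given `v : Y` lies outside only finitely many `B n`,
so `{y | v ∈ baseMap B U y}` is a finite intersection of sets `U n`, hence open; this yields
lower semi-continuity.
-/

open Set Filter Topology TopologicalSpace

/-- A strictly increasing closed cover of `Y`. -/
def SICC {Y : Type*} [TopologicalSpace Y] (B : ℕ → Set Y) : Prop :=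
  (∀ n, IsClosed (B n)) ∧ (⋃ n, B n) = Set.univ ∧ (B 0).Nonempty ∧ ∀ n, B n ⊂ B (n + 1)

/-- A lower semi-continuous set-valued map with nonempty closed values. -/
def LSCMap {X Y : Type*} [TopologicalSpace X] [TopologicalSpace Y] (φ : X → Set Y) : Prop :=
  (∀ x, (φ x).Nonempty ∧ IsClosed (φ x)) ∧
    ∀ V : Set Y, IsOpen V → IsOpen {x | (φ x ∩ V).Nonempty}

/-- The set-valued map `y ↦ ⋂ {B n | y ∉ U n}`; it takes the value `Y` on `⋂ n, U n`. -/
def baseMap {X Y : Type*} (B : ℕ → Set Y) (U : ℕ → Set X) (y : X) : Set Y :=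
  {v | ∀ n, y ∉ U n → v ∈ B n}

lemma SICC.monotone {Y : Type*} [TopologicalSpace Y] {B : ℕ → Set Y} (hB : SICC B) :
    Monotone B :=
  monotone_nat_of_le_succ fun n => (hB.2.2.2 n).subset

lemma SICC.nonempty_compl {Y : Type*} [TopologicalSpace Y] {B : ℕ → Set Y} (hB : SICC B) (n : ℕ) :
    (B n)ᶜ.Nonempty := by
  obtain ⟨v, -, hv⟩ := Set.exists_of_ssubset (hB.2.2.2 n)
  exact ⟨v, hv⟩

lemma lscMap_baseMap {X Y : Type*} [TopologicalSpace X] [TopologicalSpace Y] {B : ℕ → Set Y}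
    (hB : SICC B) {U : ℕ → Set X} (hU : ∀ n, IsOpen (U n)) : LSCMap (baseMap B U) := by
  refine ⟨fun y => ⟨?_, ?_⟩, fun V _ => ?_⟩
  · obtain ⟨v, hv⟩ := hB.2.2.1
    exact ⟨v, fun n _ => hB.monotone (Nat.zero_le n) hv⟩
  · simp only [baseMap, Set.setOf_forall]
    exact isClosed_iInter fun n => isClosed_iInter fun _ => hB.1 n
  · have key : ∀ v : Y, IsOpen {y | v ∈ baseMap B U y} := by
      intro v
      obtain ⟨m, hm⟩ : ∃ m, v ∈ B m := Set.mem_iUnion.1 (hB.2.1 ▸ Set.mem_univ v)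
      have hfin : {n | v ∉ B n}.Finite := (Set.finite_lt_nat m).subset fun n hn =>
        lt_of_not_ge fun h => hn (hB.monotone h hm)
      have heq : {y | v ∈ baseMap B U y} = ⋂ n ∈ {n | v ∉ B n}, U n := by
        ext y
        simp only [baseMap, Set.mem_setOf_eq, Set.mem_iInter]
        exact forall_congr' fun n => not_imp_comm
      rw [heq]
      exact hfin.isOpen_biInter fun n _ => hU n
    have heq : {y | (baseMap B U y ∩ V).Nonempty} = ⋃ v ∈ V, {y | v ∈ baseMap B U y} := by
      ext y
      simp only [Set.mem_setOf_eq, Set.mem_iUnion, Set.Nonempty, Set.mem_inter_iff, exists_prop]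
      exact exists_congr fun v => and_comm
    rw [heq]
    exact isOpen_biUnion fun v _ => key v

theorem statement1 {X Y : Type*} [TopologicalSpace X] [T2Space X]
    [TopologicalSpace Y] [T2Space Y] (B : ℕ → Set Y) (hB : SICC B) :
    (RegularSpace X ∧ FirstCountableTopology X) ↔
      ∃ φ : X → X → Set Y,
        (∀ x : X, LSCMap (φ x)) ∧
        (∀ x : X, ({x} : Set X) = ⋂ n, {y | (φ x y ∩ (B n)ᶜ).Nonempty}) ∧
        (∀ (x : X) (F : Set X), IsClosed F → x ∉ F →
          ∃ (V : Set X) (n : ℕ), IsOpen V ∧ F ⊆ V ∧ V ⊆ {y | φ x y ⊆ B n}) := by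
  constructor
  · rintro ⟨_, _⟩
    have hbase : ∀ x : X, ∃ U : ℕ → Set X, (∀ n, IsOpen (U n)) ∧ (∀ n, x ∈ U n) ∧
        ∀ W ∈ 𝓝 x, ∃ n, U n ⊆ W := by
      intro x
      obtain ⟨S, hS⟩ := (𝓝 x).exists_antitone_basis
      refine ⟨fun n => interior (S n), fun n => isOpen_interior,
        fun n => mem_interior_iff_mem_nhds.2 (hS.mem n), fun W hW => ?_⟩
      obtain ⟨n, hn⟩ := hS.mem_iff.1 hW
      exact ⟨n, interior_subset.trans hn⟩
    choose U hUo hxU hU using hbase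
    refine ⟨fun x => baseMap B (U x), fun x => lscMap_baseMap hB (hUo x), fun x => ?_, ?_⟩
    · ext y
      simp only [Set.mem_singleton_iff, Set.mem_iInter, Set.mem_setOf_eq]
      constructor
      · rintro rfl n
        obtain ⟨v, hv⟩ := hB.nonempty_compl n
        exact ⟨v, fun k hk => absurd (hxU y k) hk, hv⟩
      · intro h
        by_contra hne
        obtain ⟨n, hn⟩ := hU x {y}ᶜ (isOpen_compl_singleton.mem_nhds (Ne.symm hne))
        obtain ⟨v, hv, hvn⟩ := h n
        exact hvn (hv n fun hy => hn hy rfl)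
    · intro x F hF hx
      obtain ⟨C, ⟨hC, hCc⟩, hCF⟩ := (closed_nhds_basis x).mem_iff.1 (hF.isOpen_compl.mem_nhds hx)
      obtain ⟨n, hn⟩ := hU x C hC
      exact ⟨Cᶜ, n, hCc.isOpen_compl, fun y hy hyC => hCF hyC hy,
        fun y hy v hv => hv n fun hyU => hy (hn hyU)⟩
  · rintro ⟨φ, hφ, hG, hb⟩
    have hopen : ∀ x n, IsOpen {y | (φ x y ∩ (B n)ᶜ).Nonempty} := fun x n =>
      (hφ x).2 _ (hB.1 n).isOpen_compl
    have hmem : ∀ x n, {y | (φ x y ∩ (B n)ᶜ).Nonempty} ∈ 𝓝 x := fun x n =>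
      (hopen x n).mem_nhds (Set.mem_iInter.1 (hG x ▸ Set.mem_singleton x) n)
    have hdisj : ∀ x n (V : Set X), V ⊆ {y | φ x y ⊆ B n} →
        Disjoint V {y | (φ x y ∩ (B n)ᶜ).Nonempty} := fun x n V hV =>
      Set.disjoint_left.2 fun y hy ⟨v, hv, hvn⟩ => hvn (hV hy hv)
    refine ⟨⟨fun {F x} hF hx => ?_⟩, ⟨fun x => ?_⟩⟩
    · obtain ⟨V, n, hVo, hFV, hV⟩ := hb x F hF hx
      exact Filter.disjoint_iff.2 ⟨V, hVo.mem_nhdsSet.2 hFV, _, hmem x n, hdisj x n V hV⟩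
    · have hbasis : (𝓝 x).HasBasis (fun _ : ℕ => True)
          fun n => {y | (φ x y ∩ (B n)ᶜ).Nonempty} := by
        refine ⟨fun W => ⟨fun hW => ?_, fun ⟨n, _, hn⟩ => Filter.mem_of_superset (hmem x n) hn⟩⟩
        obtain ⟨V, n, -, hFV, hV⟩ := hb x (interior W)ᶜ isOpen_interior.isClosed_compl
          fun h => h (mem_interior_iff_mem_nhds.2 hW)
        refine ⟨n, trivial, fun y hy => interior_subset ?_⟩
        by_contra hyW
        exact Set.disjoint_left.1 (hdisj x n V hV) (hFV hyW) hy
      exact hbasis.isCountablyGenerated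
end

section
/- Let Y be a Hausdorff space with a strictly increasing closed cover {B_n}_{n∈ℕ}. A Hausdorff space X is k-semi-stratifiable if and only if to each closed set F ⊆ X one can assign a lower semi-continuous set-valued map φ_F : X → F(Y) such that: (G) for every closed F, F = ⋂_{n∈ℕ} φ_F^{-1}[Y∖B_n]; (m) if F₁ ⊆ F₂ are closed, then φ_{F₁}(x) ⊆ φ_{F₂}(x) for every x ∈ X; and (b) for every closed F and every compact K ⊆ X with F ∩ K = ∅, there exists n ∈ ℕ with K ⊆ φ_F^#[B_n]. -/
/-!
A k-semi-stratification `ρ` and a family `φ` are built from each other through the levels of the cover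
`B`.
From `φ` one sets `ρ n F = {x | φ F x ⊈ B n}`, which is open by lower semi-continuity and because
`B n` is closed. From `ρ` one sets `φ F x` to be the union of those `B n` for which `x` lies in all of
`ρ 0 F, …, ρ (n - 1) F`: this is the whole of `Y` for `x ∈ F`, and otherwise it is `B n` for the least
`n` with `x ∉ ρ n F`, so it is closed; it meets an open `V` exactly on a union of finite intersections
of the sets `ρ i F`, which gives lower semi-continuity. The basic fact
`levelMap_subset`, that `x ∉ ρ m F` forces `φ F x ⊆ B m`,
recovers `F` as the intersection and turns `K ∩ ρ m F = ∅` into the bound `φ F x ⊆ B m` on `K`.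
-/

open Set Filter Topology TopologicalSpace

/-- `X` is k-semi-stratifiable. -/
def KSemiStratifiable (X : Type*) [TopologicalSpace X] : Prop :=
  ∃ ρ : ℕ → Set X → Set X,
    (∀ (n : ℕ) (F : Set X), IsClosed F → IsOpen (ρ n F)) ∧
    (∀ F : Set X, IsClosed F → F = ⋂ n, ρ n F) ∧
    (∀ (n : ℕ) (F H : Set X), IsClosed F → IsClosed H → F ⊆ H → ρ n F ⊆ ρ n H) ∧
    ∀ (K F : Set X), IsCompact K → IsClosed F → K ∩ F = ∅ → ∃ m : ℕ, K ∩ ρ m F = ∅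

/-- The set-valued map attached to the sets `ρ i` (the `i`-th neighbourhood of a fixed closed set) and
the cover `B`: the union of all `B n` with `x ∈ ρ i` for every `i < n`. The term `B 0` always occurs. -/
def levelMap {X Y : Type*} (B : ℕ → Set Y) (ρ : ℕ → Set X) (x : X) : Set Y :=
  {y | ∃ n, y ∈ B n ∧ ∀ i < n, x ∈ ρ i}

section

variable {X Y : Type*} {B : ℕ → Set Y} {ρ : ℕ → Set X} {x : X}

lemma levelMap_subset (hB : Monotone B) {m : ℕ} (hx : x ∉ ρ m) : levelMap B ρ x ⊆ B m := by
  rintro y ⟨n, hy, hn⟩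
  exact hB (not_lt.1 fun h => hx (hn m h)) hy

lemma levelMap_eq_univ (hB : (⋃ n, B n) = univ) (hx : ∀ n, x ∈ ρ n) :
    levelMap B ρ x = univ := by
  refine eq_univ_of_forall fun y => ?_
  obtain ⟨n, hn⟩ := mem_iUnion.1 (hB ▸ mem_univ y)
  exact ⟨n, hn, fun i _ => hx i⟩

lemma lscMap_levelMap [TopologicalSpace X] [TopologicalSpace Y] (hB : SICC B) (hm : Monotone B)
    (hρ : ∀ n, IsOpen (ρ n)) : LSCMap (levelMap B ρ) := by
  classical
  refine ⟨fun x => ⟨?_, ?_⟩, fun V _ => ?_⟩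
  · obtain ⟨y, hy⟩ := hB.2.2.1
    exact ⟨y, 0, hy, by simp⟩
  · by_cases h : ∃ n, x ∉ ρ n
    · have : levelMap B ρ x = B (Nat.find h) :=
        (levelMap_subset hm (Nat.find_spec h)).antisymm fun y hy =>
          ⟨_, hy, fun i hi => not_not.1 (Nat.find_min h hi)⟩
      rw [this]
      exact hB.1 _
    · push Not at h
      rw [levelMap_eq_univ hB.2.1 h]
      exact isClosed_univ
  · have : {x | (levelMap B ρ x ∩ V).Nonempty} =
        ⋃ n, ⋃ (_ : (B n ∩ V).Nonempty), ⋂ i ∈ Finset.range n, ρ i := by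
      ext x
      simp only [mem_ofPred_eq, mem_iUnion, mem_iInter, Finset.mem_range]
      constructor
      · rintro ⟨y, ⟨n, hy, hn⟩, hV⟩
        exact ⟨n, ⟨y, hy, hV⟩, hn⟩
      · rintro ⟨n, ⟨y, hy, hV⟩, hn⟩
        exact ⟨y, ⟨n, hy, hn⟩, hV⟩
    rw [this]
    exact isOpen_iUnion fun n => isOpen_iUnion fun _ =>
      isOpen_biInter_finset fun i _ => hρ i

end

theorem statement6 {X Y : Type*} [TopologicalSpace X] [T2Space X]
    [TopologicalSpace Y] [T2Space Y] (B : ℕ → Set Y) (hB : SICC B) :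
    KSemiStratifiable X ↔
      ∃ φ : Set X → X → Set Y,
        (∀ F : Set X, IsClosed F → LSCMap (φ F)) ∧
        (∀ F : Set X, IsClosed F → F = ⋂ n, {x | (φ F x ∩ (B n)ᶜ).Nonempty}) ∧
        (∀ F₁ F₂ : Set X, IsClosed F₁ → IsClosed F₂ → F₁ ⊆ F₂ →
          ∀ x, φ F₁ x ⊆ φ F₂ x) ∧
        (∀ (F K : Set X), IsClosed F → IsCompact K → F ∩ K = ∅ →
          ∃ n : ℕ, K ⊆ {x | φ F x ⊆ B n}) := by
  have hm : Monotone B := monotone_nat_of_le_succ fun n => (hB.2.2.2 n).subset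
  constructor
  · rintro ⟨ρ, ho, hI, hmono, hK⟩
    refine ⟨fun F => levelMap B fun n => ρ n F, fun F hF => lscMap_levelMap hB hm (ho · F hF),
      fun F hF => ?_, fun F₁ F₂ h₁ h₂ h x y => ?_, fun F K hF hKc hd => ?_⟩
    · ext x
      simp only [mem_iInter, mem_ofPred_eq]
      constructor
      · intro hx n
        have hx' : ∀ n, x ∈ ρ n F := mem_iInter.1 (hI F hF ▸ hx)
        rw [levelMap_eq_univ hB.2.1 hx', univ_inter]
        obtain ⟨y, -, hy⟩ := exists_of_ssubset (hB.2.2.2 n)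
        exact ⟨y, hy⟩
      · intro h
        rw [hI F hF, mem_iInter]
        intro n
        by_contra hx
        obtain ⟨y, hy, hyn⟩ := h n
        exact hyn (levelMap_subset (ρ := fun n => ρ n F) hm hx hy)
    · rintro ⟨n, hy, hn⟩
      exact ⟨n, hy, fun i hi => hmono i F₁ F₂ h₁ h₂ h (hn i hi)⟩
    · obtain ⟨m, h⟩ := hK K F hKc hF (by rwa [inter_comm])
      exact ⟨m, fun x hx => levelMap_subset (ρ := fun n => ρ n F) hm
        fun hxm => (h ▸ ⟨hx, hxm⟩ : x ∈ (∅ : Set X))⟩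
  · rintro ⟨φ, hl, hG, hmono, hb⟩
    refine ⟨fun n F => {x | (φ F x ∩ (B n)ᶜ).Nonempty},
      fun n F hF => (hl F hF).2 _ (hB.1 n).isOpen_compl, hG,
      fun n F H hF hH h x hx => hx.mono (inter_subset_inter_left _ (hmono F H hF hH h x)),
      fun K F hKc hF hd => ?_⟩
    obtain ⟨n, h⟩ := hb F K hF hKc (by rwa [inter_comm])
    refine ⟨n, eq_empty_of_forall_notMem ?_⟩
    rintro x ⟨hx, y, hy, hyn⟩
    exact hyn (h hx hy)
end
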